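/- arXiv:0809.1643 — 2 statements merged into one kernel-verified Lean document; each statement's English description precedes it below -/
import Mathlib

section
/- Let p < q be reals, let n ≥ 1 be an integer, let f be (2n+1)-times continuously differentiable on [p,q], let x, x+h ∈ [p,q] with h ≠ 0, and let x, x_0, …, x_n be pairwise distinct points of [p,q]. Define a_0 = 1, a_k = −(a_0·N_k(x) + … + a_{k−1}·N_1(x)) for k = 1, …, n, and γ_k = Σ_{m=0}^{n−k} a_m·h^{k+m+1}/(k+m+1) for k = 0, …, n. Then there exist points ξ_{k,j} (0 ≤ j ≤ k ≤ n) in the smallest closed interval containing x, x_0, …, x_n, and a real R with |R| ≤ (sup over the closed interval with endpoints x and x+h of |f^{(n+1)}|)·|h|^{n+2}/(n+2)!, such that ∫_x^{x+h} f(t)dt = Σ_{k=0}^{n} Ñ^{(k)}_{0,1,…,n}[x]·γ_k + ∏_{i=0}^{n}(x − x_i) · Σ_{k=0}^{n} Σ_{j=0}^{k} a_j·(h^{k+1}/(k+1))·f^{(k+n+1−j)}(ξ_{k,j})/(k+n+1−j)! + R. -/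
/-- Divided difference `f[y i, y (i+1), …, y j]` defined by the standard recursion
`f[y_i,…,y_j] = (f[y_{i+1},…,y_j] − f[y_i,…,y_{j−1}])/(y_j − y_i)`. -/
noncomputable def divDiff (f : ℝ → ℝ) (y : ℕ → ℝ) (i j : ℕ) : ℝ :=
  if _h : j ≤ i then f (y i)
  else (divDiff f y (i + 1) j - divDiff f y i (j - 1)) / (y j - y i)
termination_by j - i
decreasing_by all_goals omega

/-- Neville iteration: `neville xs x g i j` is the iterate built from the initial
values `g j` (at node `xs j`) over the nodes `xs j, …, xs (j+i)`. -/
noncomputable def neville (xs : ℕ → ℝ) (x : ℝ) (g : ℕ → ℝ) : ℕ → ℕ → ℝ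
  | 0, j => g j
  | i + 1, j =>
      ((xs (i + 1 + j) - x) * neville xs x g i j - (xs j - x) * neville xs x g i (j + 1)) /
        (xs (i + 1 + j) - xs j)

/-- Aitken iteration with base index `r`: `aitken xs x g r i j` is the iterate
`d_{r,r+1,…,i,j}` (for `r ≤ i < j`) built from the initial values `g j` at the nodes `xs j`. -/
noncomputable def aitken (xs : ℕ → ℝ) (x : ℝ) (g : ℕ → ℝ) (r : ℕ) (i j : ℕ) : ℝ :=
  if _h : i ≤ r then ((xs j - x) * g r - (xs r - x) * g j) / (xs j - xs r)
  else ((xs j - x) * aitken xs x g r (i - 1) i - (xs i - x) * aitken xs x g r (i - 1) j) /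
        (xs j - xs i)
termination_by i
decreasing_by all_goals omega

/-- The full Aitken iterate `d_{r,r+1,…,n}` (equal to the initial value when `n = r`). -/
noncomputable def aitkenLast (xs : ℕ → ℝ) (x : ℝ) (g : ℕ → ℝ) (r n : ℕ) : ℝ :=
  if n ≤ r then g n else aitken xs x g r (n - 1) n

/-- Confluent divided difference `g[x,…,x (m times), xi]`, defined using
`g[x,…,x (m times)] = g^{(m−1)}(x)/(m−1)!` and `g[xi] = g xi`. -/
noncomputable def confDD (g : ℝ → ℝ) (x xi : ℝ) : ℕ → ℝ
  | 0 => g xi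
  | m + 1 => (confDD g x xi m - iteratedDeriv m g x / (Nat.factorial m : ℝ)) / (xi - x)

/-! Let `c i = f⁽ⁱ⁾(x)/i!` be the Taylor coefficients of `f`. The confluent divided difference of
`f` at `k + 1` copies of `x` and the nodes `x₀, …, xₙ` is `f⁽ⁿ⁺ᵏ⁺¹⁾(ξ)/(n+k+1)!` by Rolle's theorem
with a multiple zero at `x`, applied to `f` minus its Hermite interpolant. Expanding the divided
difference in Lagrange form turns this into the triangular system
`∑ i ≤ k, c i * N_{k-i}(x) = Ñ⁽ᵏ⁾[x] + ∏ᵢ (x - xᵢ) * f⁽ⁿ⁺ᵏ⁺¹⁾(ξ)/(n+k+1)!`.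
The `a k` are the coefficients of the reciprocal of the generating series of `N_r(x)`, so they
solve the system for the `c k`, which then enter the Taylor expansion of `∫ f`. The remainder of
that expansion is the same mean value theorem for a primitive of `f`, with `x + h` as the only
node. -/

section

open Finset Polynomial Nat

/-- `D 0, …, D N` are successive derivatives within `s`: each `D (i + 1)` with `i < N` is the
derivative of `D i`. -/
def HasDerivChainOn (D : ℕ → ℝ → ℝ) (N : ℕ) (s : Set ℝ) : Prop :=
  ∀ i < N, ∀ t ∈ s, HasDerivWithinAt (D i) (D (i + 1) t) s t

namespace HasDerivChainOn

variable {D E : ℕ → ℝ → ℝ} {M N : ℕ} {s t : Set ℝ}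

theorem mono (hD : HasDerivChainOn D N t) (hMN : M ≤ N) (hst : s ⊆ t) : HasDerivChainOn D M s :=
  fun i hi u hu ↦ (hD i (hi.trans_le hMN) u (hst hu)).mono hst

theorem tail (hD : HasDerivChainOn D (N + 1) s) : HasDerivChainOn (fun i ↦ D (i + 1)) N s :=
  fun i hi ↦ hD (i + 1) (by lia)

theorem sub (hD : HasDerivChainOn D N s) (hE : HasDerivChainOn E N s) :
    HasDerivChainOn (fun i u ↦ D i u - E i u) N s :=
  fun i hi u hu ↦ (hD i hi u hu).sub (hE i hi u hu)

theorem continuousOn (hD : HasDerivChainOn D N s) {i : ℕ} (hi : i < N) : ContinuousOn (D i) s :=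
  fun u hu ↦ (hD i hi u hu).continuousWithinAt

end HasDerivChainOn

theorem hasDerivChainOn_iteratedDerivWithin {f : ℝ → ℝ} {N : ℕ} {s : Set ℝ}
    (hf : ContDiffOn ℝ N f s) (hs : UniqueDiffOn ℝ s) :
    HasDerivChainOn (fun i ↦ iteratedDerivWithin i f s) N s := fun i hi t ht ↦ by
  simp only [iteratedDerivWithin_succ]
  exact (hf.differentiableOn_iteratedDerivWithin (mod_cast hi) hs t ht).hasDerivWithinAt

theorem hasDerivChainOn_iterate_derivative (P : ℝ[X]) (N : ℕ) (s : Set ℝ) :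
    HasDerivChainOn (fun i t ↦ (derivative^[i] P).eval t) N s := fun i _ t _ ↦ by
  simp only [Function.iterate_succ_apply']
  exact (derivative^[i] P).hasDerivWithinAt t s

/-- Prepends to the chain `D` the primitive of `D 0` that vanishes at `x`. -/
noncomputable def primitiveChain (x : ℝ) (D : ℕ → ℝ → ℝ) : ℕ → ℝ → ℝ
  | 0 => fun t ↦ ∫ u in x..t, D 0 u
  | i + 1 => D i

theorem hasDerivChainOn_primitiveChain {D : ℕ → ℝ → ℝ} {N : ℕ} {x y : ℝ}
    (hD : HasDerivChainOn D N (Set.uIcc x y)) (hD₀ : ContinuousOn (D 0) (Set.uIcc x y)) :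
    HasDerivChainOn (primitiveChain x D) (N + 1) (Set.uIcc x y)
  | 0, _, t, ht => by
    have : Fact (t ∈ Set.Icc (x ⊓ y) (x ⊔ y)) := ⟨ht⟩
    exact intervalIntegral.integral_hasDerivWithinAt_right
      (s := Set.Icc (x ⊓ y) (x ⊔ y)) (t := Set.Icc (x ⊓ y) (x ⊔ y))
      (hD₀.mono (Set.uIcc_subset_uIcc_left ht)).intervalIntegrable
      (hD₀.stronglyMeasurableAtFilter_nhdsWithin measurableSet_Icc t) (hD₀ t ht)
  | i + 1, hi, t, ht => hD i (by lia) t ht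

section Rolle

variable {D : ℕ → ℝ → ℝ} {u v : ℝ → ℝ} {s : Set ℝ} {S : Finset ℝ}

theorem exists_mem_Ioo_hasDerivWithinAt_eq_zero (hs : s.OrdConnected)
    (huv : ∀ t ∈ s, HasDerivWithinAt u (v t) s t) {a b : ℝ} (ha : a ∈ s) (hb : b ∈ s)
    (hab : a < b) (hu : u a = u b) : ∃ c ∈ Set.Ioo a b, v c = 0 := by
  have hsub : Set.Icc a b ⊆ s := hs.out ha hb
  refine exists_hasDerivAt_eq_zero hab
    (fun t ht ↦ ((huv t (hsub ht)).mono hsub).continuousWithinAt) hu fun t ht ↦ ?_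
  exact (huv t (hsub (Set.Ioo_subset_Icc_self ht))).hasDerivAt
    (Filter.mem_of_superset (Icc_mem_nhds ht.1 ht.2) hsub)

theorem exists_finset_hasDerivWithinAt_eq_zero (hs : s.OrdConnected)
    (huv : ∀ t ∈ s, HasDerivWithinAt u (v t) s t) (hS : ↑S ⊆ s) (hu : ∀ t ∈ S, u t = 0) :
    ∃ T : Finset ℝ, ↑T ⊆ s ∧ Disjoint T S ∧ (∀ t ∈ T, v t = 0) ∧ #S ≤ #T + 1 := by
  have rolle : ∀ a ∈ S, ∀ b ∈ S, a < b → ∃ c ∈ Set.Ioo a b, v c = 0 := fun a ha b hb hab ↦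
    exists_mem_Ioo_hasDerivWithinAt_eq_zero hs huv (hS ha) (hS hb) hab
      ((hu a ha).trans (hu b hb).symm)
  choose! c hc hvc using rolle
  set T : Finset ℝ := {ab ∈ S ×ˢ S | ab.1 < ab.2}.image fun ab ↦ c ab.1 ab.2 with hT
  have hTs : ∀ t ∈ T, t ∈ s ∧ v t = 0 := by
    simp only [hT, mem_image, mem_filter, mem_product]
    rintro _ ⟨⟨a, b⟩, ⟨⟨ha, hb⟩, hab⟩, rfl⟩
    exact ⟨hs.out (hS ha) (hS hb) (Set.Ioo_subset_Icc_self (hc a ha b hb hab)), hvc a ha b hb hab⟩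
  refine ⟨T \ S, fun t ht ↦ (hTs t (mem_sdiff.1 ht).1).1, sdiff_disjoint,
    fun t ht ↦ (hTs t (mem_sdiff.1 ht).1).2, card_le_sdiff_of_interleaved fun a ha b hb hab _ ↦ ?_⟩
  exact ⟨c a b, mem_image.2 ⟨(a, b), by simp [ha, hb, hab], rfl⟩, hc a ha b hb hab⟩

theorem HasDerivChainOn.exists_eq_zero {m : ℕ} (hD : HasDerivChainOn D m s) (hs : s.OrdConnected)
    (hS : ↑S ⊆ s) (hcard : m + 1 ≤ #S) (hD₀ : ∀ t ∈ S, D 0 t = 0) : ∃ ξ ∈ s, D m ξ = 0 := by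
  induction m generalizing D S with
  | zero =>
    obtain ⟨t, ht⟩ := card_pos.1 hcard
    exact ⟨t, hS ht, hD₀ t ht⟩
  | succ m ih =>
    obtain ⟨T, hTs, -, hT₀, hST⟩ :=
      exists_finset_hasDerivWithinAt_eq_zero hs (hD 0 m.succ_pos) hS hD₀
    exact ih hD.tail hTs (by lia) hT₀

theorem HasDerivChainOn.exists_eq_zero_of_multiple_zero {k m : ℕ} {x : ℝ}
    (hD : HasDerivChainOn D (m + k) s) (hs : s.OrdConnected) (hS : ↑S ⊆ s) (hcard : m + 1 ≤ #S)
    (hD₀ : ∀ t ∈ S, D 0 t = 0) (hx : x ∈ s) (hxS : x ∉ S) (hDx : ∀ i < k, D i x = 0) :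
    ∃ ξ ∈ s, D (m + k) ξ = 0 := by
  induction k generalizing D S with
  | zero => exact hD.exists_eq_zero hs hS hcard hD₀
  | succ k ih =>
    obtain ⟨T, hTs, hTS, hT₀, hST⟩ := exists_finset_hasDerivWithinAt_eq_zero (S := insert x S) hs
      (hD 0 (by lia)) (by simpa [Set.insert_subset_iff] using ⟨hx, hS⟩)
      (by simpa using ⟨hDx 0 k.succ_pos, hD₀⟩)
    rw [card_insert_of_notMem hxS] at hST
    have hxT : x ∉ T := fun h ↦ disjoint_left.1 hTS h (mem_insert_self x S)
    exact ih hD.tail hTs (by lia) hT₀ hxT fun i hi ↦ hDx (i + 1) (by lia)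

end Rolle

section IterateDerivative

variable {R : Type*} [Semiring R]

theorem eval_iterate_derivative_eq_factorial_mul_coeff_taylor (x : R) (P : R[X]) (i : ℕ) :
    (derivative^[i] P).eval x = i ! * (taylor x P).coeff i := by
  rw [taylor_coeff, ← factorial_smul_hasseDeriv, LinearMap.smul_apply, eval_smul, nsmul_eq_mul]

theorem iterate_derivative_eq_C_of_natDegree_le {P : R[X]} {N : ℕ} (hP : P.natDegree ≤ N) :
    derivative^[N] P = C (N ! * P.coeff N) := by
  ext j
  rw [coeff_iterate_derivative, coeff_C]
  split_ifs with hj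
  · simp [hj, Nat.descFactorial_self]
  · rw [coeff_eq_zero_of_natDegree_lt (by lia), smul_zero]

end IterateDerivative

section HermiteExtension

variable {R : Type*} [CommRing R]

/-- The polynomial `∑ i < k, cᵢ (X - x)ⁱ + (X - x)ᵏ V`: it has the prescribed Taylor coefficients
`cᵢ` of order less than `k` at `x`, while `V` is free to match values elsewhere. -/
noncomputable def hermiteExtension (c : ℕ → R) (x : R) (k : ℕ) (V : R[X]) : R[X] :=
  ∑ i ∈ range k, C (c i) * (X - C x) ^ i + (X - C x) ^ k * V

variable (c : ℕ → R) (x : R) (k : ℕ) (V : R[X])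

theorem eval_hermiteExtension (t : R) : (hermiteExtension c x k V).eval t =
    ∑ i ∈ range k, c i * (t - x) ^ i + (t - x) ^ k * V.eval t := by
  simp [hermiteExtension, eval_finsetSum]

theorem taylor_hermiteExtension : taylor x (hermiteExtension c x k V) =
    ∑ i ∈ range k, C (c i) * X ^ i + X ^ k * taylor x V := by
  simp [hermiteExtension, taylor_mul, taylor_pow]

theorem eval_iterate_derivative_hermiteExtension {i : ℕ} (hi : i < k) :
    (derivative^[i] (hermiteExtension c x k V)).eval x = i ! * c i := by
  rw [eval_iterate_derivative_eq_factorial_mul_coeff_taylor, taylor_hermiteExtension]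
  simp [coeff_X_pow_mul', hi, hi.not_ge]

theorem iterate_derivative_hermiteExtension {V : R[X]} {m : ℕ} (hV : V.natDegree ≤ m) :
    derivative^[m + k] (hermiteExtension c x k V) = C ((m + k)! * V.coeff m) := by
  have hlow : derivative^[m + k] (∑ i ∈ range k, C (c i) * (X - C x) ^ i) = 0 := by
    rw [iterate_derivative_sum]
    refine sum_eq_zero fun i hi ↦ iterate_derivative_eq_zero ?_
    have hdeg : ((X - C x) ^ i).natDegree ≤ i := by
      simpa using natDegree_pow_le_of_le i (natDegree_X_sub_C_le x)
    exact ((natDegree_C_mul_le _ _).trans hdeg).trans_lt (by have := mem_range.1 hi; lia)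
  have hpow : ((X - C x) ^ k).natDegree ≤ k := by
    simpa using natDegree_pow_le_of_le k (natDegree_X_sub_C_le x)
  have hlead : ((X - C x) ^ k).coeff k = 1 := by
    simpa using coeff_pow_of_natDegree_le (m := k) (natDegree_X_sub_C_le x)
  rw [hermiteExtension, iterate_map_add, hlow, zero_add, mul_comm,
    iterate_derivative_eq_C_of_natDegree_le (natDegree_mul_le_of_le hV hpow),
    coeff_mul_add_eq_of_natDegree_le hV hpow, hlead, mul_one]

end HermiteExtension

/-- The confluent divided difference of `D 0` at `k` copies of `x` and one copy of `t ≠ x`, where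
`D 1, D 2, …` are the derivatives of `D 0`. -/
noncomputable def taylorQuotient (D : ℕ → ℝ → ℝ) (x : ℝ) (k : ℕ) (t : ℝ) : ℝ :=
  (D 0 t - ∑ i ∈ range k, D i x / i ! * (t - x) ^ i) / (t - x) ^ k

theorem taylorQuotient_succ (D : ℕ → ℝ → ℝ) {x t : ℝ} (k : ℕ) (htx : t ≠ x) :
    taylorQuotient D x (k + 1) t = (x - t)⁻¹ *
      (∑ i ∈ range (k + 1), D i x / i ! * (1 / (t - x) ^ (k - i)) - D 0 t / (t - x) ^ k) := by
  have htx' : t - x ≠ 0 := sub_ne_zero.2 htx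
  have hpow : ∀ i ∈ range (k + 1), D i x / i ! * (t - x) ^ i / (t - x) ^ k =
      D i x / i ! * (1 / (t - x) ^ (k - i)) := fun i hi ↦ by
    rw [← pow_sub_mul_pow (t - x) (mem_range_succ_iff.1 hi)]
    field_simp
  rw [taylorQuotient, ← sum_congr rfl hpow, ← sum_div, ← sub_div, ← neg_sub t x, pow_succ]
  field_simp
  ring

section ConfluentInterpolation

variable {ι : Type*} [DecidableEq ι] {D : ℕ → ℝ → ℝ} {s : Set ℝ} {x : ℝ} {m : ℕ}
  {I : Finset ι} {v : ι → ℝ}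

theorem HasDerivChainOn.exists_div_factorial_eq_sum_nodalWeight {k : ℕ}
    (hD : HasDerivChainOn D (m + k) s) (hs : s.OrdConnected) (hx : x ∈ s) (hI : #I = m + 1)
    (hv : Set.InjOn v I) (hvs : ∀ l ∈ I, v l ∈ s) (hvx : ∀ l ∈ I, v l ≠ x) :
    ∃ ξ ∈ s, D (m + k) ξ / (m + k)! =
      ∑ l ∈ I, Lagrange.nodalWeight I v l * taylorQuotient D x k (v l) := by
  set V : ℝ[X] := Lagrange.interpolate I v fun l ↦ taylorQuotient D x k (v l)
  set G : ℝ[X] := hermiteExtension (fun i ↦ D i x / i !) x k V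
  have hVeval : ∀ l ∈ I, V.eval (v l) = taylorQuotient D x k (v l) := fun l hl ↦
    Lagrange.eval_interpolate_at_node _ hv hl
  have hVlt : V.degree < #I := Lagrange.degree_interpolate_lt _ hv
  have hVdeg : V.natDegree ≤ m :=
    natDegree_le_of_degree_le ((Lagrange.degree_interpolate_le _ hv).trans_eq (by simp [hI]))
  have hVcoeff : V.coeff m =
      ∑ l ∈ I, Lagrange.nodalWeight I v l * taylorQuotient D x k (v l) := by
    rw [show m = #I - 1 by lia, Lagrange.coeff_eq_sum hv hVlt]
    refine sum_congr rfl fun l hl ↦ ?_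
    rw [hVeval l hl, Lagrange.nodalWeight, prod_inv_distrib, div_eq_inv_mul]
  have hGnode : ∀ t ∈ I.image v, D 0 t - G.eval t = 0 := by
    refine forall_mem_image.2 fun l hl ↦ ?_
    have hpow : (v l - x) ^ k ≠ 0 := pow_ne_zero k (sub_ne_zero.2 (hvx l hl))
    rw [eval_hermiteExtension, hVeval l hl, taylorQuotient, mul_div_cancel₀ _ hpow]
    ring
  have hGx : ∀ i < k, D i x - (derivative^[i] G).eval x = 0 := fun i hi ↦ by
    rw [eval_iterate_derivative_hermiteExtension _ _ _ _ hi]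
    field_simp
    ring
  obtain ⟨ξ, hξ, hξ₀⟩ :=
    (hD.sub (hasDerivChainOn_iterate_derivative G (m + k) s)).exists_eq_zero_of_multiple_zero
      hs (S := I.image v) (by simpa [Set.subset_def] using hvs)
      (by rw [Finset.card_image_of_injOn hv, hI]) hGnode hx (by simpa using hvx) hGx
  refine ⟨ξ, hξ, ?_⟩
  rw [iterate_derivative_hermiteExtension _ _ _ hVdeg, eval_C, sub_eq_zero] at hξ₀
  rw [hξ₀, hVcoeff, mul_div_cancel_left₀ _ (by positivity)]

theorem HasDerivChainOn.exists_sum_div_factorial_mul_eval_interpolate_eq {k : ℕ}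
    (hD : HasDerivChainOn D (m + (k + 1)) s) (hs : s.OrdConnected) (hx : x ∈ s) (hI : #I = m + 1)
    (hv : Set.InjOn v I) (hvs : ∀ l ∈ I, v l ∈ s) (hvx : ∀ l ∈ I, v l ≠ x) :
    ∃ ξ ∈ s, ∑ i ∈ range (k + 1), D i x / i ! *
        (Lagrange.interpolate I v fun l ↦ 1 / (v l - x) ^ (k - i)).eval x =
      (Lagrange.interpolate I v fun l ↦ D 0 (v l) / (v l - x) ^ k).eval x +
        (∏ l ∈ I, (x - v l)) * (D (m + (k + 1)) ξ / (m + (k + 1))!) := by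
  obtain ⟨ξ, hξ, hmean⟩ := hD.exists_div_factorial_eq_sum_nodalWeight hs hx hI hv hvs hvx
  refine ⟨ξ, hξ, ?_⟩
  set F : ι → ℝ := fun l ↦ D 0 (v l) / (v l - x) ^ k
  set r : ℕ → ι → ℝ := fun i l ↦ 1 / (v l - x) ^ (k - i)
  have hlinear : (Lagrange.interpolate I v
        (∑ i ∈ range (k + 1), (D i x / i !) • r i - F)).eval x =
      ∑ i ∈ range (k + 1), D i x / i ! * (Lagrange.interpolate I v (r i)).eval x -
        (Lagrange.interpolate I v F).eval x := by
    simp only [map_sub, map_sum, map_smul, eval_sub, eval_finsetSum, eval_smul, smul_eq_mul]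
  rw [← sub_eq_iff_eq_add', ← hlinear, hmean,
    Lagrange.eval_interpolate_not_at_node _ fun l hl ↦ (hvx l hl).symm, Lagrange.eval_nodal]
  congr 1
  refine sum_congr rfl fun l hl ↦ ?_
  rw [taylorQuotient_succ D k (hvx l hl), mul_assoc]
  simp [F, r]

end ConfluentInterpolation

theorem HasDerivChainOn.exists_integral_eq_sum_add {D : ℕ → ℝ → ℝ} {n : ℕ} {x h : ℝ}
    (hD : HasDerivChainOn D (n + 1) (Set.uIcc x (x + h))) :
    ∃ ζ ∈ Set.uIcc x (x + h), ∫ t in x..x + h, D 0 t =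
      ∑ k ∈ range (n + 1), D k x / k ! * (h ^ (k + 1) / (k + 1)) +
        D (n + 1) ζ * h ^ (n + 2) / (n + 2)! := by
  rcases eq_or_ne h 0 with rfl | hh
  · exact ⟨x, Set.left_mem_uIcc, by simp⟩
  have hP : HasDerivChainOn (primitiveChain x D) (0 + (n + 2)) (Set.uIcc x (x + h)) := by
    simpa using hasDerivChainOn_primitiveChain hD (hD.continuousOn n.succ_pos)
  obtain ⟨ζ, hζ, hmean⟩ := hP.exists_div_factorial_eq_sum_nodalWeight (I := {()})
    (v := fun _ ↦ x + h) Set.ordConnected_uIcc Set.left_mem_uIcc rfl (by simp) (by simp)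
    (by simpa using hh)
  refine ⟨ζ, hζ, ?_⟩
  have hterm : ∀ k ∈ range (n + 1), D k x / (k + 1)! * h ^ (k + 1) =
      D k x / k ! * (h ^ (k + 1) / (k + 1)) := fun k _ ↦ by
    rw [factorial_succ]
    push_cast
    field_simp
  have hremainder : D (n + 1) ζ / (n + 2)! = ((∫ t in x..x + h, D 0 t) -
      ∑ k ∈ range (n + 1), D k x / k ! * (h ^ (k + 1) / (k + 1))) / h ^ (n + 2) := by
    simpa [Lagrange.nodalWeight, taylorQuotient, sum_range_succ' _ (n + 1), primitiveChain,
      sum_congr rfl hterm] using hmean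
  rw [mul_div_right_comm, hremainder, div_mul_cancel₀ _ (pow_ne_zero _ hh), add_sub_cancel]

section Neville

variable {X : ℕ → ℝ} {x : ℝ}

theorem neville_eq_eval_interpolate (g : ℕ → ℝ) {i j : ℕ} (hX : Set.InjOn X (Icc j (j + i))) :
    neville X x g i j = (Lagrange.interpolate (Icc j (j + i)) X g).eval x := by
  induction i generalizing j with
  | zero => simp [neville]
  | succ i ih =>
    have hlast : (Icc j (j + (i + 1))).erase (j + (i + 1)) = Icc j (j + i) := by
      ext l; simp only [mem_erase, mem_Icc]; lia
    have hfirst : (Icc j (j + (i + 1))).erase j = Icc (j + 1) (j + 1 + i) := by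
      ext l; simp only [mem_erase, mem_Icc]; lia
    have hne : X (j + (i + 1)) - X j ≠ 0 :=
      sub_ne_zero.2 (hX.ne (by simp) (by simp) (by lia))
    have hne' : X j - X (j + (i + 1)) ≠ 0 := by rwa [← neg_sub, neg_ne_zero]
    rw [neville, ih (hX.mono (by simp only [← hlast, coe_erase, Set.sdiff_subset])),
      ih (hX.mono (by simp only [← hfirst, coe_erase, Set.sdiff_subset])),
      Lagrange.interpolate_eq_add_interpolate_erase g hX (i := j) (j := j + (i + 1))
        (by simp) (by simp) (by lia), hlast, hfirst, show i + 1 + j = j + (i + 1) by lia]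
    simp only [Lagrange.basisDivisor, eval_add, eval_mul, eval_C, eval_sub, eval_X]
    field_simp
    ring

theorem neville_zero_eq_eval_interpolate (g : ℕ → ℝ) {n : ℕ} (hX : Set.InjOn X (range (n + 1))) :
    neville X x g n 0 = (Lagrange.interpolate (range (n + 1)) X g).eval x := by
  have hrange : range (n + 1) = Icc 0 (0 + n) := by ext l; simp
  rw [hrange] at hX ⊢
  exact neville_eq_eval_interpolate g hX

theorem neville_one {n : ℕ} (hX : Set.InjOn X (range (n + 1))) :
    neville X x (fun _ ↦ 1) n 0 = 1 := by
  rw [neville_zero_eq_eval_interpolate _ hX]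
  exact (congrArg (eval x) (Lagrange.interpolate_one hX (by simp))).trans eval_one

theorem HasDerivChainOn.exists_sum_div_factorial_mul_neville_eq {D : ℕ → ℝ → ℝ} {s : Set ℝ}
    {n k : ℕ} (hD : HasDerivChainOn D (n + (k + 1)) s) (hs : s.OrdConnected) (hx : x ∈ s)
    (hX : Set.InjOn X (range (n + 1))) (hXs : ∀ i ≤ n, X i ∈ s) (hXx : ∀ i ≤ n, X i ≠ x) :
    ∃ ξ ∈ convexHull ℝ (insert x (X '' Set.Iic n)), ∑ i ∈ range (k + 1), D i x / i ! *
        neville X x (fun l ↦ 1 / (X l - x) ^ (k - i)) n 0 =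
      neville X x (fun l ↦ D 0 (X l) / (X l - x) ^ k) n 0 +
        (∏ i ∈ range (n + 1), (x - X i)) * (D (n + (k + 1)) ξ / (n + (k + 1))!) := by
  have hnodes : insert x (X '' Set.Iic n) ⊆ s :=
    Set.insert_subset hx (Set.image_subset_iff.2 hXs)
  have hhull := subset_convexHull ℝ (insert x (X '' Set.Iic n))
  simp only [neville_zero_eq_eval_interpolate _ hX]
  exact (hD.mono le_rfl (convexHull_min hnodes hs.convex))
    |>.exists_sum_div_factorial_mul_eval_interpolate_eq (convex_convexHull ℝ _).ordConnected
      (hhull (Set.mem_insert _ _)) (card_range _) hX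
      (fun i hi ↦ hhull (.inr ⟨i, mem_range_succ_iff.1 hi, rfl⟩))
      fun i hi ↦ hXx i (mem_range_succ_iff.1 hi)

end Neville

section Convolution

theorem sum_range_mul_sub_eq_ite {R : Type*} [Ring R] {a N : ℕ → R} {m : ℕ} (ha₀ : a 0 = 1)
    (hN₀ : N 0 = 1) (ha : 1 ≤ m → a m = -∑ j ∈ range m, a j * N (m - j)) :
    ∑ j ∈ range (m + 1), a j * N (m - j) = if m = 0 then 1 else 0 := by
  rcases m.eq_zero_or_pos with rfl | hm
  · simp [ha₀, hN₀]
  · rw [sum_range_succ, Nat.sub_self, hN₀, mul_one, ha hm, add_neg_cancel, if_neg hm.ne']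

variable {R : Type*} [CommSemiring R] {a : ℕ → R}

theorem eq_sum_range_mul_sub_of_convolution_eq {N c b : ℕ → R} {n : ℕ}
    (haN : ∀ m ≤ n, ∑ j ∈ range (m + 1), a j * N (m - j) = if m = 0 then 1 else 0)
    (hcN : ∀ k ≤ n, ∑ i ∈ range (k + 1), c i * N (k - i) = b k) :
    c n = ∑ j ∈ range (n + 1), a j * b (n - j) := by
  calc
    c n = ∑ i ∈ range (n + 1), c i * if n - i = 0 then 1 else 0 := by
      rw [sum_range_succ, sum_eq_zero fun i hi ↦ by simp [Nat.sub_ne_zero_of_lt (mem_range.1 hi)]]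
      simp
    _ = ∑ i ∈ range (n + 1), ∑ j ∈ range (n - i + 1), c i * (a j * N (n - i - j)) :=
      sum_congr rfl fun i _ ↦ by rw [← haN (n - i) (n.sub_le i), mul_sum]
    _ = ∑ j ∈ range (n + 1), ∑ i ∈ range (n - j + 1), c i * (a j * N (n - i - j)) :=
      sum_comm' fun i j ↦ by simp only [mem_range]; lia
    _ = ∑ j ∈ range (n + 1), a j * b (n - j) := sum_congr rfl fun j _ ↦ by
      rw [← hcN (n - j) (n.sub_le j), mul_sum]
      refine sum_congr rfl fun i _ ↦ ?_
      rw [Nat.sub_right_comm, mul_left_comm]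

theorem sum_range_sum_range_mul_sub_mul (n : ℕ) (B w : ℕ → R) :
    ∑ k ∈ range (n + 1), (∑ j ∈ range (k + 1), a j * B (k - j)) * w k =
      ∑ k ∈ range (n + 1), B k * ∑ m ∈ range (n - k + 1), a m * w (k + m) := by
  calc
    _ = ∑ k ∈ range (n + 1), ∑ j ∈ range (k + 1), a j * B (k - j) * w (j + (k - j)) := by
      refine sum_congr rfl fun k _ ↦ ?_
      rw [sum_mul]
      refine sum_congr rfl fun j hj ↦ ?_
      rw [Nat.add_sub_cancel' (mem_range_succ_iff.1 hj)]
    _ = ∑ m ∈ range (n + 1), ∑ k ∈ range (n + 1 - m), a m * B k * w (m + k) :=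
      sum_range_diag_flip (n + 1) fun j l ↦ a j * B l * w (j + l)
    _ = ∑ k ∈ range (n + 1), ∑ m ∈ range (n - k + 1), a m * B k * w (m + k) :=
      sum_comm' fun m k ↦ by simp only [mem_range]; lia
    _ = _ := by
      simp only [mul_sum]
      exact sum_congr rfl fun k _ ↦ sum_congr rfl fun m _ ↦ by rw [add_comm m]; ring

theorem sum_range_mul_eq_of_convolution_eq {N c B e : ℕ → R} {P : R} {n : ℕ}
    (haN : ∀ m ≤ n, ∑ j ∈ range (m + 1), a j * N (m - j) = if m = 0 then 1 else 0)
    (hcN : ∀ k ≤ n, ∑ i ∈ range (k + 1), c i * N (k - i) = B k + P * e k) (w : ℕ → R) :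
    ∑ k ∈ range (n + 1), c k * w k =
      ∑ k ∈ range (n + 1), B k * ∑ m ∈ range (n - k + 1), a m * w (k + m) +
        P * ∑ k ∈ range (n + 1), ∑ j ∈ range (k + 1), a j * w k * e (k - j) := by
  rw [← sum_range_sum_range_mul_sub_mul, mul_sum, ← sum_add_distrib]
  refine sum_congr rfl fun k hk ↦ ?_
  have hkn : k ≤ n := mem_range_succ_iff.1 hk
  rw [eq_sum_range_mul_sub_of_convolution_eq (fun m hm ↦ haN m (hm.trans hkn))
    fun i hi ↦ hcN i (hi.trans hkn)]
  simp only [sum_mul, mul_sum, ← sum_add_distrib]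
  exact sum_congr rfl fun j _ ↦ by ring

end Convolution

theorem abs_mul_pow_div_factorial_le {g : ℝ → ℝ} {K : Set ℝ} (hK : IsCompact K)
    (hg : ContinuousOn g K) {ζ : ℝ} (hζ : ζ ∈ K) (h : ℝ) (N : ℕ) :
    |g ζ * h ^ N / N !| ≤ sSup ((fun t ↦ |g t|) '' K) * |h| ^ N / N ! := by
  rw [abs_div, abs_mul, abs_pow, Nat.abs_cast]
  gcongr
  exact le_csSup (hK.image_of_continuousOn hg.abs).bddAbove ⟨ζ, hζ, rfl⟩

theorem stmt_8_general {D : ℕ → ℝ → ℝ} {s : Set ℝ} (hs : s.OrdConnected) {n : ℕ} (hn : 1 ≤ n)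
    (hD : HasDerivChainOn D (2 * n + 1) s) {x h : ℝ} (hx : x ∈ s) (hxh : x + h ∈ s)
    {X : ℕ → ℝ} (hX : ∀ i ≤ n, X i ∈ s) (hxX : ∀ i ≤ n, X i ≠ x)
    (hXX : ∀ i j, i ≤ n → j ≤ n → i ≠ j → X i ≠ X j) {a : ℕ → ℝ} (ha0 : a 0 = 1)
    (hak : ∀ m, 1 ≤ m → m ≤ n →
      a m = -∑ j ∈ range m, a j * neville X x (fun i ↦ 1 / (X i - x) ^ (m - j)) n 0)
    {γ : ℕ → ℝ}
    (hγ : ∀ k ≤ n, γ k = ∑ m ∈ range (n - k + 1), a m * h ^ (k + m + 1) / (k + m + 1)) :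
    ∃ ξ : ℕ → ℕ → ℝ,
      (∀ k ≤ n, ∀ j ≤ k, ξ k j ∈ convexHull ℝ (insert x (X '' Set.Iic n))) ∧
      ∃ R : ℝ,
        |R| ≤ sSup ((fun t ↦ |D (n + 1) t|) '' Set.uIcc x (x + h)) * |h| ^ (n + 2) / (n + 2)! ∧
        ∫ t in x..x + h, D 0 t =
          ∑ k ∈ range (n + 1), neville X x (fun i ↦ D 0 (X i) / (X i - x) ^ k) n 0 * γ k +
            (∏ i ∈ range (n + 1), (x - X i)) *
              ∑ k ∈ range (n + 1), ∑ j ∈ range (k + 1),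
                a j * (h ^ (k + 1) / (k + 1)) * D (k + n + 1 - j) (ξ k j) / (k + n + 1 - j)! +
            R := by
  have hinj : Set.InjOn X (range (n + 1)) := fun i hi j hj hij ↦ by
    by_contra hne
    exact hXX i j (mem_range_succ_iff.1 hi) (mem_range_succ_iff.1 hj) hne hij
  have hmean := fun k (hk : k ≤ n) ↦ (hD.mono (M := n + (k + 1)) (by lia)
    subset_rfl).exists_sum_div_factorial_mul_neville_eq hs hx hinj hX hxX
  choose! η hη hmean using hmean
  have hinv : ∀ m ≤ n, ∑ j ∈ range (m + 1),
      a j * neville X x (fun i ↦ 1 / (X i - x) ^ (m - j)) n 0 = if m = 0 then 1 else 0 :=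
    fun m hm ↦ sum_range_mul_sub_eq_ite (N := fun r ↦ neville X x (fun i ↦ 1 / (X i - x) ^ r) n 0)
      ha0 (by simpa using neville_one hinj) fun hm₁ ↦ hak m hm₁ hm
  have huIcc : Set.uIcc x (x + h) ⊆ s := hs.uIcc_subset hx hxh
  obtain ⟨ζ, hζ, htaylor⟩ :=
    (hD.mono (M := n + 1) (by lia) huIcc).exists_integral_eq_sum_add
  refine ⟨fun k j ↦ η (k - j), fun k hk j _ ↦ hη _ ((k.sub_le j).trans hk), _,
    abs_mul_pow_div_factorial_le isCompact_uIcc ((hD.continuousOn (by lia)).mono huIcc) hζ h _, ?_⟩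
  rw [htaylor, sum_range_mul_eq_of_convolution_eq
    (N := fun r ↦ neville X x (fun i ↦ 1 / (X i - x) ^ r) n 0) hinv hmean]
  congr 2
  · refine sum_congr rfl fun k hk ↦ ?_
    rw [hγ k (mem_range_succ_iff.1 hk)]
    push_cast
    simp only [mul_div_assoc]
  · congr 1
    refine sum_congr rfl fun k _ ↦ sum_congr rfl fun j hj ↦ ?_
    have hindex : n + (k - j + 1) = k + n + 1 - j := by have := mem_range_succ_iff.1 hj; lia
    rw [hindex, mul_div_assoc]

end

theorem stmt_8 (p q : ℝ) (hpq : p < q) (n : ℕ) (hn : 1 ≤ n)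
    (f : ℝ → ℝ) (hf : ContDiffOn ℝ (2 * n + 1 : ℕ) f (Set.Icc p q))
    (x h : ℝ) (hh : h ≠ 0) (hx : x ∈ Set.Icc p q) (hxh : x + h ∈ Set.Icc p q)
    (X : ℕ → ℝ) (hX : ∀ i ≤ n, X i ∈ Set.Icc p q)
    (hxX : ∀ i ≤ n, X i ≠ x)
    (hXX : ∀ i j, i ≤ n → j ≤ n → i ≠ j → X i ≠ X j)
    (a : ℕ → ℝ) (ha0 : a 0 = 1)
    (hak : ∀ m, 1 ≤ m → m ≤ n →
      a m = -(∑ j ∈ Finset.range m, a j * neville X x (fun i => 1 / (X i - x) ^ (m - j)) n 0))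
    (γ : ℕ → ℝ)
    (hγ : ∀ k ≤ n, γ k = ∑ m ∈ Finset.range (n - k + 1), a m * h ^ (k + m + 1) / (k + m + 1 : ℝ)) :
    ∃ ξ : ℕ → ℕ → ℝ,
      (∀ k ≤ n, ∀ j ≤ k, ξ k j ∈ convexHull ℝ (insert x (X '' Set.Iic n))) ∧
      ∃ R : ℝ,
        |R| ≤ sSup ((fun s => |iteratedDerivWithin (n + 1) f (Set.Icc p q) s|) '' Set.uIcc x (x + h))
                * |h| ^ (n + 2) / (Nat.factorial (n + 2) : ℝ) ∧
        (∫ s in x..(x + h), f s)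
          = (∑ k ∈ Finset.range (n + 1), neville X x (fun i => f (X i) / (X i - x) ^ k) n 0 * γ k)
            + (∏ i ∈ Finset.range (n + 1), (x - X i))
              * (∑ k ∈ Finset.range (n + 1), ∑ j ∈ Finset.range (k + 1),
                  a j * (h ^ (k + 1) / (k + 1 : ℝ))
                    * iteratedDerivWithin (k + n + 1 - j) f (Set.Icc p q) (ξ k j)
                      / (Nat.factorial (k + n + 1 - j) : ℝ))
            + R := by
  simpa only [iteratedDerivWithin_zero] using stmt_8_general Set.ordConnected_Icc hn
    (hasDerivChainOn_iteratedDerivWithin hf (uniqueDiffOn_Icc hpq)) hx hxh hX hxX hXX ha0 hak hγ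
end

section
/- Let P be a real polynomial with deg P ≤ n, let 1 ≤ r ≤ n, and let x, x_0, …, x_n be pairwise distinct reals. Then the divided difference P[x, x_0, …, x_{r−1}] equals the Aitken iterate d_{r,r+1,…,n}[x] built from the initial values d_j[x] = P[x_j, x_0, …, x_{r−1}], j = r, …, n; that is, the Aitken iteration reconstructs the divided-difference polynomial exactly, with zero error. -/
/-!
Write `W = ∏ i < r, (X - xᵢ)` and let `Q` be the quotient of `P` by `W`. The divided difference of
`P` at `t, x₀, …, xᵣ₋₁` is `Q(t)`: dividing by one more factor `X - b` replaces `Q` by its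
difference quotient `(Q(t) - Q(b)) / (t - b)`, which is the recursion of divided differences. On the
other side, the Aitken recursion is the recursion joining the interpolation polynomials on two node
sets that differ in one node, so `d_{r,…,n}[x]` is the value at `x` of the polynomial interpolating
`Q` at `xᵣ, …, xₙ`. As `deg Q ≤ n - r`, that polynomial is `Q` itself.
-/

open Polynomial Lagrange Finset

section DivByMonic

theorem divByMonic_mul_eq_divByMonic_divByMonic {R : Type*} [Ring R] (p : R[X]) {q s : R[X]}
    (hq : q.Monic) (hs : s.Monic) : p /ₘ (q * s) = p /ₘ q /ₘ s := by
  nontriviality R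
  refine (div_modByMonic_unique (p /ₘ q /ₘ s) (p %ₘ q + q * (p /ₘ q %ₘ s)) (hq.mul hs) ⟨?_, ?_⟩).1
  · rw [add_assoc, mul_assoc, ← mul_add, modByMonic_add_div, modByMonic_add_div]
  · have hq_le : q.degree ≤ (q * s).degree := by
      rw [hs.degree_mul]
      exact le_add_of_nonneg_right (zero_le_degree_iff.2 hs.ne_zero)
    have h_mul_lt : (q * (p /ₘ q %ₘ s)).degree < (q * s).degree := by
      rw [hq.degree_mul_comm, hq.degree_mul_comm, hq.degree_mul, hq.degree_mul]
      exact WithBot.add_lt_add_right (degree_ne_bot.2 hq.ne_zero) (degree_modByMonic_lt _ hs)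
    exact (degree_add_le _ _).trans_lt
      (max_lt ((degree_modByMonic_lt p hq).trans_le hq_le) h_mul_lt)

variable {F ι : Type*} [Field F] [DecidableEq ι]

theorem eval_divByMonic_X_sub_C (p : F[X]) {a b : F} (hab : a ≠ b) :
    (p /ₘ (X - C b)).eval a = (p.eval b - p.eval a) / (b - a) := by
  have h := congrArg (eval a) (modByMonic_add_div p (X - C b))
  simp only [modByMonic_X_sub_C_eq_C_eval, eval_add, eval_mul, eval_sub, eval_X, eval_C] at h
  rw [eq_div_iff (sub_ne_zero.2 hab.symm)]
  linear_combination -h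

theorem eval_divByMonic_nodal_insert (p : F[X]) {s : Finset ι} {v : ι → F} {a b : ι} (hb : b ∉ s)
    (hab : v a ≠ v b) :
    (p /ₘ nodal (insert b s) v).eval (v a) =
      ((p /ₘ nodal s v).eval (v b) - (p /ₘ nodal s v).eval (v a)) / (v b - v a) := by
  rw [nodal_insert_eq_nodal hb, mul_comm,
    divByMonic_mul_eq_divByMonic_divByMonic p nodal_monic (monic_X_sub_C _),
    eval_divByMonic_X_sub_C _ hab]

theorem eval_divByMonic_nodal_erase_eq (p : F[X]) {s : Finset ι} {v : ι → F} {a b : ι}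
    (hv : Set.InjOn v s) (ha : a ∈ s) (hb : b ∈ s) :
    (p /ₘ nodal (s.erase a) v).eval (v a) = (p /ₘ nodal (s.erase b) v).eval (v b) := by
  obtain rfl | hab := eq_or_ne a b
  · rfl
  have hvab : v a ≠ v b := hv.ne ha hb hab
  have ha_erase : s.erase a = insert b ((s.erase a).erase b) :=
    (insert_erase (mem_erase.2 ⟨hab.symm, hb⟩)).symm
  have hb_erase : s.erase b = insert a ((s.erase a).erase b) := by
    rw [erase_right_comm, insert_erase (mem_erase.2 ⟨hab, ha⟩)]
  rw [ha_erase, hb_erase, eval_divByMonic_nodal_insert p (by simp) hvab,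
    eval_divByMonic_nodal_insert p (by simp) hvab.symm, ← neg_div_neg_eq, neg_sub, neg_sub]

end DivByMonic

section DividedDifference

theorem divDiff_eval_eq_eval_divByMonic_nodal_erase (p : ℝ[X]) {y : ℕ → ℝ} {i j k : ℕ}
    (hy : Set.InjOn y (Icc i j)) (hk : k ∈ Icc i j) :
    divDiff (fun t => p.eval t) y i j = (p /ₘ nodal ((Icc i j).erase k) y).eval (y k) := by
  induction hm : j - i generalizing i j k with
  | zero =>
    obtain rfl : k = i := by grind
    obtain rfl : k = j := by grind
    rw [divDiff, dif_pos le_rfl, Icc_self, erase_singleton, nodal_empty, divByMonic_one]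
  | succ m ih =>
    have hij : i < j := by omega
    have hi : i ∈ Icc i j := left_mem_Icc.2 hij.le
    have hj : j ∈ Icc i j := right_mem_Icc.2 hij.le
    have h_init : divDiff (fun t => p.eval t) y i (j - 1) =
        (p /ₘ nodal (Ioo i j) y).eval (y i) := by
      rw [ih (hy.mono (by grind)) (k := i) (by grind) (by omega),
        show (Icc i (j - 1)).erase i = Ioo i j by grind]
    have h_tail : divDiff (fun t => p.eval t) y (i + 1) j =
        (p /ₘ nodal (Ioo i j) y).eval (y j) := by
      rw [ih (hy.mono (by grind)) (k := j) (by grind) (by omega),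
        show (Icc (i + 1) j).erase j = Ioo i j by grind]
    rw [divDiff, dif_neg hij.not_ge, h_init, h_tail, eval_divByMonic_nodal_erase_eq p hy hk hi,
      Icc_erase_left, ← Ioo_insert_right hij,
      eval_divByMonic_nodal_insert p right_notMem_Ioo (hy.ne hi hj hij.ne)]

theorem divDiff_cons_eq_eval_divByMonic_nodal (p : ℝ[X]) {v : ℕ → ℝ} {r : ℕ} {t : ℝ}
    (hv : Set.InjOn v (range r)) (ht : ∀ i < r, v i ≠ t) :
    divDiff (fun y => p.eval y) (fun i => if i = 0 then t else v (i - 1)) 0 r =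
      (p /ₘ nodal (range r) v).eval t := by
  set y : ℕ → ℝ := fun i => if i = 0 then t else v (i - 1)
  have hy_inj : Set.InjOn y (Icc 0 r) := by
    rintro (_ | i) hi (_ | j) hj hij
    · rfl
    · exact absurd hij.symm (ht j (by grind))
    · exact absurd hij (ht i (by grind))
    · exact congrArg (· + 1) (hv (by grind) (by grind) hij)
  have h_nodal : nodal ((Icc 0 r).erase 0) y = nodal (range r) v := by
    rw [Icc_erase_left, show Ioc 0 r = Ico 1 (r + 1) by grind, nodal, prod_Ico_eq_prod_range]
    simp [nodal, y]
  rw [divDiff_eval_eq_eval_divByMonic_nodal_erase p hy_inj (left_mem_Icc.2 r.zero_le), h_nodal]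
  rfl

end DividedDifference

section Aitken

theorem eval_interpolate_insert_insert {F ι : Type*} [Field F] [DecidableEq ι] {s : Finset ι}
    {v : ι → F} (g : ι → F) {i j : ι} (hi : i ∉ s) (hj : j ∉ s) (hij : i ≠ j)
    (hv : Set.InjOn v (insert i (insert j s) : Finset ι)) (x : F) :
    (interpolate (insert i (insert j s)) v g).eval x =
      ((v j - x) * (interpolate (insert i s) v g).eval x -
        (v i - x) * (interpolate (insert j s) v g).eval x) / (v j - v i) := by
  have hi_erase : (insert i (insert j s)).erase i = insert j s := by grind
  have hj_erase : (insert i (insert j s)).erase j = insert i s := by grind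
  have hvij : v i ≠ v j := hv.ne (by simp) (by simp) hij
  rw [interpolate_eq_add_interpolate_erase g hv (by simp) (by simp) hij, hi_erase, hj_erase]
  simp only [basisDivisor, eval_add, eval_mul, eval_sub, eval_X, eval_C]
  grind

variable {v : ℕ → ℝ} {r : ℕ}

theorem aitken_eq_eval_interpolate (g : ℕ → ℝ) {i j : ℕ} (hri : r ≤ i) (hij : i < j)
    (hv : Set.InjOn v (insert j (Icc r i) : Finset ℕ)) (x : ℝ) :
    aitken v x g r i j = (interpolate (insert j (Icc r i)) v g).eval x := by
  induction i, hri using Nat.le_induction generalizing j with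
  | base =>
    rw [Icc_self, pair_comm] at hv ⊢
    rw [← insert_empty_eq j, eval_interpolate_insert_insert g (by simp) (by simp) hij.ne hv,
      aitken, dif_pos le_rfl]
    simp
  | succ i hri ih =>
    have h_Icc : Icc r (i + 1) = insert (i + 1) (Icc r i) := by grind
    rw [h_Icc, insert_comm] at hv ⊢
    rw [eval_interpolate_insert_insert g (by simp) (by grind) hij.ne hv,
      ← ih (by omega) (hv.mono (by grind)), ← ih (by omega) (hv.mono (by grind)),
      aitken, dif_neg (by omega), Nat.add_sub_cancel]

theorem aitkenLast_eq_eval_interpolate (g : ℕ → ℝ) {n : ℕ} (hrn : r ≤ n)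
    (hv : Set.InjOn v (Icc r n)) (x : ℝ) :
    aitkenLast v x g r n = (interpolate (Icc r n) v g).eval x := by
  obtain rfl | hlt := hrn.eq_or_lt
  · simp [aitkenLast]
  have h_Icc : Icc r n = insert n (Icc r (n - 1)) := by grind
  rw [h_Icc] at hv ⊢
  rw [aitkenLast, if_neg hlt.not_ge,
    aitken_eq_eval_interpolate g (Nat.le_sub_one_of_lt hlt) (by omega) hv]

theorem aitkenLast_eq_eval_of_natDegree_le {q : ℝ[X]} {g : ℕ → ℝ} {n : ℕ} (hrn : r ≤ n)
    (hv : Set.InjOn v (Icc r n)) (hq : q.natDegree ≤ n - r)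
    (hg : ∀ j ∈ Icc r n, q.eval (v j) = g j) (x : ℝ) :
    aitkenLast v x g r n = q.eval x := by
  have hq_lt : q.degree < #(Icc r n) := by
    refine degree_le_natDegree.trans_lt (Nat.cast_lt.2 ?_)
    rw [Nat.card_Icc]
    omega
  rw [aitkenLast_eq_eval_interpolate g hrn hv, ← eq_interpolate_of_eval_eq g hv hq_lt hg]

end Aitken

theorem stmt_13 (n r : ℕ) (hr : 1 ≤ r) (hrn : r ≤ n)
    (P : Polynomial ℝ) (hP : P.degree ≤ (n : WithBot ℕ)) (x : ℝ) (X : ℕ → ℝ)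
    (hxX : ∀ i ≤ n, X i ≠ x)
    (hXX : ∀ i j, i ≤ n → j ≤ n → i ≠ j → X i ≠ X j) :
    divDiff (fun y => P.eval y) (fun i => if i = 0 then x else X (i - 1)) 0 r = aitkenLast X x (fun j => divDiff (fun y => P.eval y) (fun i => if i = 0 then X j else X (i - 1)) 0 r) r n := by
  have h_inj : Set.InjOn X (Iic n) := by
    intro i hi j hj hij
    by_contra hne
    exact hXX i j (by simpa using hi) (by simpa using hj) hne hij
  have h_range : Set.InjOn X (range r) := h_inj.mono (by grind)
  have h_tail : Set.InjOn X (Icc r n) := h_inj.mono (by grind)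
  have h_natDegree : (P /ₘ nodal (range r) X).natDegree ≤ n - r := by
    rw [natDegree_divByMonic P nodal_monic, natDegree_nodal, card_range]
    exact Nat.sub_le_sub_right (natDegree_le_of_degree_le hP) r
  rw [divDiff_cons_eq_eval_divByMonic_nodal P h_range fun i hi => hxX i (by omega)]
  refine (aitkenLast_eq_eval_of_natDegree_le hrn h_tail h_natDegree (fun j hj => ?_) x).symm
  rw [mem_Icc] at hj
  exact (divDiff_cons_eq_eval_divByMonic_nodal P h_range fun i hi =>
    hXX i j (by omega) hj.2 (by omega)).symm
end
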